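/- arXiv:1312.2487 — 6 statements merged into one kernel-verified Lean document; each statement's English description precedes it below -/
import Mathlib

section
/- Let μ be a Borel probability measure on the unit circle 𝕋, and suppose there is a continuous function h on the closed unit disc 𝔻̄ such that h(z) = η_μ(z) for all z ∈ 𝔻 and |h(ξ)| < 1 for every ξ ∈ 𝕋. Then μ is absolutely continuous with respect to arclength measure dθ on 𝕋, and its density is the continuous function f(e^{iθ}) = (1/2π)·(1 − |h(e^{−iθ})|²)/|1 − h(e^{−iθ})|²; that is, μ(A) = ∫_{{θ ∈ (−π,π] : e^{iθ} ∈ A}} f(e^{iθ}) dθ for every Borel set A ⊆ 𝕋. -/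
open MeasureTheory Complex Set Metric

/-- The ψ-transform of a measure on the unit circle: `ψ_μ(z) = ∫_𝕋 ξz/(1−ξz) dμ(ξ)`. -/
noncomputable def psiC (μ : Measure ℂ) (z : ℂ) : ℂ :=
  ∫ ξ, (ξ * z) / (1 - ξ * z) ∂μ

/-- The η-transform: `η_μ(z) = ψ_μ(z)/(1+ψ_μ(z))`. -/
noncomputable def etaC (μ : Measure ℂ) (z : ℂ) : ℂ :=
  psiC μ z / (1 + psiC μ z)

lemma aux_fourier_unique [Fact (0 < 2 * Real.pi)] (P Q : Measure (AddCircle (2 * Real.pi)))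
    [IsFiniteMeasure P] [IsFiniteMeasure Q]
    (hn : ∀ n : ℕ, ∫ x, fourier (n : ℤ) x ∂P = ∫ x, fourier (n : ℤ) x ∂Q) : P = Q := by
  have hz : ∀ n : ℤ, ∫ x, fourier n x ∂P = ∫ x, fourier n x ∂Q := by
    intro n
    obtain ⟨m, rfl | rfl⟩ := n.eq_nat_or_neg
    · exact hn m
    · simp only [fourier_neg, integral_conj, hn m]
  have hI : ∀ (R : Measure (AddCircle (2 * Real.pi))) [IsFiniteMeasure R]
      (g : C(AddCircle (2 * Real.pi), ℂ)), Integrable g R := fun R _ g =>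
    (BoundedContinuousFunction.mkOfCompact g).integrable R
  have hs : ∀ g ∈ Submodule.span ℂ (range (@fourier (2 * Real.pi))),
      ∫ x, g x ∂P = ∫ x, g x ∂Q := by
    intro g hg
    induction hg using Submodule.span_induction with
    | mem x hx => obtain ⟨n, rfl⟩ := hx; exact hz n
    | zero => simp
    | add x y _ _ hx hy =>
      simp only [ContinuousMap.add_apply]
      rw [integral_add (hI P x) (hI P y), integral_add (hI Q x) (hI Q y), hx, hy]
    | smul a x _ hx => simp only [ContinuousMap.smul_apply, integral_smul, hx]
  let A : StarSubalgebra ℂ (BoundedContinuousFunction (AddCircle (2 * Real.pi)) ℂ) :=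
    (fourierSubalgebra).comap (BoundedContinuousFunction.toContinuousMapStarₐ ℂ)
  refine ext_of_forall_mem_subalgebra_integral_eq_of_polish (𝕜 := ℂ) (A := A) ?_ ?_
  · intro x y hxy
    obtain ⟨f, ⟨g, hg, rfl⟩, hf⟩ := fourierSubalgebra_separatesPoints hxy
    refine ⟨g, ⟨g, ⟨BoundedContinuousFunction.mkOfCompact g, ?_, ?_⟩, rfl⟩, hf⟩
    · exact hg
    · rfl
  · intro g hg
    have : (BoundedContinuousFunction.toContinuousMapStarₐ ℂ g) ∈
      Submodule.span ℂ (range (@fourier (2 * Real.pi))) := by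
      rw [← fourierSubalgebra_coe]; exact hg
    exact hs _ this

lemma aux_ae (μ : Measure ℂ) (hsupp : μ (sphere (0 : ℂ) 1)ᶜ = 0) : ∀ᵐ ξ ∂μ, ‖ξ‖ = 1 := by
  rw [ae_iff]
  convert hsupp using 2
  ext; simp

lemma aux_hasSum (μ : Measure ℂ) [IsProbabilityMeasure μ] (hae : ∀ᵐ ξ ∂μ, ‖ξ‖ = 1)
    (z : ℂ) (hz : ‖z‖ < 1) :
    HasSum (fun n : ℕ => (∫ ξ, ξ ^ n ∂μ) * z ^ n) (1 + psiC μ z) := by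
  have hnb : ∀ n : ℕ, ∀ᵐ ξ ∂μ, ‖(ξ * z) ^ n‖ = ‖z‖ ^ n := by
    intro n; filter_upwards [hae] with ξ h; simp [h]
  have hint : ∀ n : ℕ, Integrable (fun ξ : ℂ => (ξ * z) ^ n) μ := by
    intro n
    refine Integrable.of_bound (by fun_prop) (‖z‖ ^ n) ?_
    filter_upwards [hnb n] with ξ h using h.le
  have := hasSum_integral_of_summable_integral_norm (μ := μ) (F := fun (n : ℕ) (ξ : ℂ) => (ξ * z) ^ n)
    hint (by
      have : (fun n : ℕ => ∫ ξ, ‖(ξ * z) ^ n‖ ∂μ) = fun n => ‖z‖ ^ n := by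
        ext n; rw [integral_congr_ae (hnb n)]; simp
      rw [this]; exact summable_geometric_of_lt_one (norm_nonneg _) hz)
  have hne : ∀ᵐ ξ ∂μ, ‖ξ * z‖ < 1 := by filter_upwards [hae] with ξ h; simpa [h]
  have hden : ∀ w : ℂ, ‖w‖ < 1 → 1 - w ≠ 0 := by
    intro w hw h0
    rw [← sub_eq_zero.mp h0] at hw; simp at hw
  have e0 : (fun n : ℕ => (∫ ξ, ξ ^ n ∂μ) * z ^ n) = fun n => ∫ ξ, (ξ * z) ^ n ∂μ := by
    ext n; simp only [mul_pow]; rw [integral_mul_const]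
  have e1 : 1 + psiC μ z = ∫ ξ, ∑' n : ℕ, (ξ * z) ^ n ∂μ := by
    have e : (fun ξ : ℂ => ∑' n : ℕ, (ξ * z) ^ n) =ᵐ[μ] fun ξ => 1 + (ξ * z) / (1 - ξ * z) := by
      filter_upwards [hne] with ξ h
      have := hden _ h
      rw [tsum_geometric_of_norm_lt_one h]; field_simp; ring
    rw [integral_congr_ae e, integral_add (integrable_const _), psiC]
    · simp
    · refine Integrable.of_bound (Measurable.aestronglyMeasurable (by fun_prop)) (‖z‖ / (1 - ‖z‖)) ?_
      filter_upwards [hae, hne] with ξ h h1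
      have h2 : 1 - ‖z‖ ≤ ‖1 - ξ * z‖ := by
        have := norm_sub_norm_le 1 (ξ * z)
        simpa [h] using this
      rw [norm_div, norm_mul, h, one_mul]
      have : 0 < 1 - ‖z‖ := by linarith
      gcongr
  rw [e0, e1]; exact this

lemma aux_ps (μ : Measure ℂ) [IsProbabilityMeasure μ] (hae : ∀ᵐ ξ ∂μ, ‖ξ‖ = 1) :
    HasFPowerSeriesOnBall (fun z => 1 + psiC μ z)
      (FormalMultilinearSeries.ofScalars ℂ (fun n : ℕ => ∫ ξ, ξ ^ n ∂μ)) 0 1 where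
  r_le := by
    refine FormalMultilinearSeries.le_radius_of_bound (r := 1) _ 1 ?_
    intro n
    simp only [FormalMultilinearSeries.ofScalars_norm, NNReal.coe_one, one_pow, mul_one]
    have := norm_integral_le_of_norm_le_const (μ := μ) (f := fun ξ : ℂ => ξ ^ n) (C := 1)
      (by filter_upwards [hae] with ξ h; simp [h])
    simpa using this
  r_pos := one_pos
  hasSum := by
    intro y hy
    have hy' : ‖y‖ < 1 := by
      have : y ∈ Metric.eball (0 : ℂ) (ENNReal.ofReal 1) := by simpa using hy
      rw [Metric.eball_ofReal] at this
      simpa using this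
    have := aux_hasSum μ hae y hy'
    simpa [FormalMultilinearSeries.ofScalars_apply_eq, mul_comm] using this

lemma aux_circ (g : ℂ → ℂ) :
    ∫ θ in (-Real.pi)..Real.pi, g (Complex.exp (-θ * I)) =
      I⁻¹ * ∮ z in C(0, 1), z⁻¹ * g z := by
  have h1 := intervalIntegral.integral_comp_neg (a := -Real.pi) (b := Real.pi) (fun θ : ℝ => g (Complex.exp (θ * I)))
  have hp : Function.Periodic (fun θ : ℝ => g (Complex.exp (θ * I))) (2 * Real.pi) := by
    intro θ
    simp only; congr 1
    push_cast
    rw [add_mul, Complex.exp_add, Complex.exp_two_pi_mul_I, mul_one]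
  have h2 := hp.intervalIntegral_add_eq (-Real.pi) 0
  have e : -Real.pi + 2 * Real.pi = Real.pi := by ring
  rw [e, zero_add] at h2
  rw [neg_neg, h2] at h1
  push_cast at h1
  rw [h1, circleIntegral, ← intervalIntegral.integral_const_mul]
  congr 1; ext θ
  simp [circleMap]
  have := Complex.exp_ne_zero (θ * I)
  field_simp
  simp

lemma aux_re (μ : Measure ℂ) [IsProbabilityMeasure μ] (hae : ∀ᵐ ξ ∂μ, ‖ξ‖ = 1)
    (z : ℂ) (hz : ‖z‖ < 1) : 1 + psiC μ z ≠ 0 := by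
  have hne : ∀ᵐ ξ ∂μ, ‖ξ * z‖ < 1 := by filter_upwards [hae] with ξ h; simpa [h]
  have hint : Integrable (fun ξ : ℂ => (ξ * z) / (1 - ξ * z)) μ := by
      refine Integrable.of_bound (Measurable.aestronglyMeasurable (by fun_prop)) (‖z‖ / (1 - ‖z‖)) ?_
      filter_upwards [hae, hne] with ξ h h1
      have h2 : 1 - ‖z‖ ≤ ‖1 - ξ * z‖ := by
        have := norm_sub_norm_le 1 (ξ * z)
        simpa [h] using this
      rw [norm_div, norm_mul, h, one_mul]
      have : 0 < 1 - ‖z‖ := by linarith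
      gcongr
  have hre : -(1/2) ≤ (psiC μ z).re := by
    have h1 : (psiC μ z).re = ∫ ξ, ((ξ * z) / (1 - ξ * z)).re ∂μ := by
      rw [psiC]; exact (integral_re hint).symm
    rw [h1]
    have : ∫ ξ : ℂ, (-(1/2) : ℝ) ∂μ ≤ ∫ ξ, ((ξ * z) / (1 - ξ * z)).re ∂μ := by
      refine integral_mono_ae (integrable_const _) hint.re ?_
      filter_upwards [hne] with ξ h
      set w := ξ * z
      have hw : Complex.normSq w < 1 := by
        rw [Complex.normSq_eq_norm_sq]; nlinarith [norm_nonneg w]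
      have hpos : 0 < Complex.normSq (1 - w) := by
        rw [Complex.normSq_pos]
        intro h0
        rw [← sub_eq_zero.mp h0] at h; simp at h
      rw [Complex.div_re, ← add_div, le_div_iff₀ hpos]
      simp only [Complex.normSq_apply, Complex.sub_re, Complex.sub_im, Complex.one_re, Complex.one_im] at *
      nlinarith
    simpa using this
  intro h0
  have := congrArg Complex.re h0
  simp at this
  linarith

/-- If the η-transform of a Borel probability measure `μ` on the unit circle extends
continuously to the closed unit disc with boundary values of modulus strictly less
than 1, then `μ` is absolutely continuous with respect to arclength `dθ`, with
continuous density `f(e^{iθ}) = (1/2π)(1 − |h(e^{−iθ})|²)/|1 − h(e^{−iθ})|²`. -/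
theorem density_from_continuous_eta (μ : Measure ℂ) [IsProbabilityMeasure μ]
    (hsupp : μ (sphere (0 : ℂ) 1)ᶜ = 0) (h : ℂ → ℂ)
    (hc : ContinuousOn h (closedBall 0 1))
    (heq : ∀ z ∈ ball (0 : ℂ) 1, h z = etaC μ z)
    (hlt : ∀ ξ ∈ sphere (0 : ℂ) 1, ‖h ξ‖ < 1) :
    Continuous (fun θ : ℝ =>
      (1 / (2 * Real.pi)) * (1 - ‖h (Complex.exp (-θ * Complex.I))‖ ^ 2)
        / ‖1 - h (Complex.exp (-θ * Complex.I))‖ ^ 2) ∧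
    ∀ A : Set ℂ, MeasurableSet A →
      (μ A).toReal =
        ∫ θ in {θ : ℝ | θ ∈ Set.Ioc (-Real.pi) Real.pi ∧ Complex.exp (θ * Complex.I) ∈ A},
          (1 / (2 * Real.pi)) * (1 - ‖h (Complex.exp (-θ * Complex.I))‖ ^ 2)
            / ‖1 - h (Complex.exp (-θ * Complex.I))‖ ^ 2 := by
  have hae := aux_ae μ hsupp
  have : Fact (0 < 2 * Real.pi) := ⟨Real.two_pi_pos⟩
  have hpi : (Real.pi : ℂ) ≠ 0 := by exact_mod_cast Real.pi_ne_zero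
  have hball : ∀ z ∈ ball (0 : ℂ) 1, 1 - h z = (1 + psiC μ z)⁻¹ := by
    intro z hz
    have := aux_re μ hae z (by simpa using hz)
    rw [heq z hz, etaC]; field_simp; ring
  have hne : ∀ z ∈ closedBall (0 : ℂ) 1, 1 - h z ≠ 0 := by
    intro z hz
    rcases (mem_closedBall_zero_iff.mp hz).lt_or_eq with h1 | h1
    · rw [hball z (by simpa using h1)]
      exact inv_ne_zero (aux_re μ hae z h1)
    · intro h0
      have := hlt z (by simpa using h1)
      rw [← sub_eq_zero.mp h0] at this
      simp at this
  set G : ℂ → ℂ := fun z => (1 - h z)⁻¹ with hG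
  have hGb : ∀ z ∈ ball (0 : ℂ) 1, G z = 1 + psiC μ z := by
    intro z hz; simp only [hG]; rw [hball z hz, inv_inv]
  have hGc : ContinuousOn G (closedBall 0 1) := (continuousOn_const.sub hc).inv₀ hne
  have hps := aux_ps μ hae
  have heb : Metric.eball (0 : ℂ) 1 = ball 0 1 := by
    rw [← Metric.eball_ofReal]; simp
  have hGps : HasFPowerSeriesOnBall G
      (FormalMultilinearSeries.ofScalars ℂ (fun n : ℕ => ∫ ξ, ξ ^ n ∂μ)) 0 1 := by
    refine hps.congr ?_
    rw [heb]
    intro z hz; exact (hGb z hz).symm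
  have hGd : DiffContOnCl ℂ G (ball 0 1) := by
    refine ⟨?_, ?_⟩
    · have := hGps.differentiableOn
      rwa [heb] at this
    · rwa [closure_ball _ one_ne_zero]
  have hG0 : G 0 = 1 := by
    rw [hGb 0 (by simp)]; simp [psiC]
  have hmom : ∀ n : ℕ, ∮ z in C(0, 1), z⁻¹ * ((z⁻¹) ^ n * G z)
      = (2 * Real.pi * I) * ∫ ξ, ξ ^ n ∂μ := by
    intro n
    have h1 := DiffContOnCl.hasFPowerSeriesOnBall (R := 1) (by simpa using hGd) one_pos
    have h2 := h1.hasFPowerSeriesAt.eq_formalMultilinearSeries hGps.hasFPowerSeriesAt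
    have h3 := congrArg (fun p : FormalMultilinearSeries ℂ ℂ ℂ => p n fun _ => 1) h2
    simp only [cauchyPowerSeries_apply, FormalMultilinearSeries.ofScalars_apply_eq] at h3
    simp only [sub_zero, one_div, smul_eq_mul, one_pow, mul_one, NNReal.coe_one] at h3
    rw [← h3, ← mul_assoc, mul_inv_cancel₀ (by simp [hpi]), one_mul]
    congr 1; ext z; ring
  have hconj : ∀ n : ℕ, ∮ z in C(0, 1), z⁻¹ * (z ^ n * (G z - 1)) = 0 := by
    intro n
    have hd : DiffContOnCl ℂ (fun z => z ^ n * (G z - 1)) (ball 0 1) :=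
      DiffContOnCl.smul (f := fun z : ℂ => G z - 1) (c := fun z : ℂ => z ^ n)
        (Differentiable.diffContOnCl (by fun_prop)) (hGd.sub diffContOnCl_const)
    have := hd.circleIntegral_sub_inv_smul (w := 0) (by simp)
    simpa [hG0] using this
  have hmem : ∀ θ : ℝ, Complex.exp (-θ * I) ∈ sphere (0 : ℂ) 1 := by
    intro θ
    have := Complex.norm_exp_ofReal_mul_I (-θ)
    push_cast at this
    simpa using this
  have hmem' : ∀ θ : ℝ, Complex.exp (-θ * I) ∈ closedBall (0 : ℂ) 1 := fun θ =>
    sphere_subset_closedBall (hmem θ)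
  have hec : Continuous (fun θ : ℝ => Complex.exp (-θ * I)) := by fun_prop
  have hhc : Continuous (fun θ : ℝ => h (Complex.exp (-θ * I))) := hc.comp_continuous hec hmem'
  have hGcc : Continuous (fun θ : ℝ => G (Complex.exp (-θ * I))) := hGc.comp_continuous hec hmem'
  have hcont : Continuous (fun θ : ℝ =>
      (1 / (2 * Real.pi)) * (1 - ‖h (Complex.exp (-θ * Complex.I))‖ ^ 2)
        / ‖1 - h (Complex.exp (-θ * Complex.I))‖ ^ 2) := by
    refine Continuous.div (continuous_const.mul (continuous_const.sub (hhc.norm.pow 2)))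
      ((continuous_const.sub hhc).norm.pow 2) ?_
    intro θ
    have := hne _ (hmem' θ)
    positivity
  refine ⟨hcont, ?_⟩
  set f : ℝ → ℝ := fun θ : ℝ =>
      (1 / (2 * Real.pi)) * (1 - ‖h (Complex.exp (-θ * Complex.I))‖ ^ 2)
        / ‖1 - h (Complex.exp (-θ * Complex.I))‖ ^ 2 with hf
  have hf0 : ∀ θ, 0 ≤ f θ := by
    intro θ
    have := hlt _ (hmem θ)
    have h2 : 0 ≤ 1 - ‖h (Complex.exp (-θ * Complex.I))‖ ^ 2 := by
      nlinarith [norm_nonneg (h (Complex.exp (-θ * Complex.I)))]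
    have := Real.pi_pos
    simp only [hf]
    positivity
  have hfG : ∀ θ, (f θ : ℂ) = (1 / (2 * Real.pi)) *
      (G (Complex.exp (-θ * I)) + (starRingEnd ℂ) (G (Complex.exp (-θ * I)) - 1)) := by
    intro θ
    have h1 := hne _ (hmem' θ)
    simp only [hf, hG]
    push_cast
    rw [← Complex.mul_conj', ← Complex.mul_conj']
    generalize h (Complex.exp (-θ * I)) = w at h1 ⊢
    have h2 : 1 - (starRingEnd ℂ) w ≠ 0 := by
      have := (map_ne_zero (starRingEnd ℂ)).mpr h1
      simpa using this
    simp only [map_sub, map_one, map_inv₀]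
    field_simp
    ring
  have hfour : ∀ n : ℕ, ∫ θ in Ioc (-Real.pi) Real.pi, (f θ : ℂ) * Complex.exp (θ * I) ^ n
      = ∫ ξ, ξ ^ n ∂μ := by
    intro n
    rw [← intervalIntegral.integral_of_le (by linarith [Real.pi_pos])]
    have hA := aux_circ (fun z => (z⁻¹) ^ n * G z)
    have hB := aux_circ (fun z => z ^ n * (G z - 1))
    rw [hmom n] at hA
    rw [hconj n, mul_zero] at hB
    have hB' : ∫ θ in (-Real.pi)..Real.pi, (starRingEnd ℂ)
        (Complex.exp (-θ * I) ^ n * (G (Complex.exp (-θ * I)) - 1)) = 0 := by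
      rw [intervalIntegral.integral_of_le (by linarith [Real.pi_pos])] at hB ⊢
      rw [integral_conj, hB, map_zero]
    have hsplit : ∀ θ : ℝ, (f θ : ℂ) * Complex.exp (θ * I) ^ n = (1 / (2 * Real.pi)) *
        (((Complex.exp (-θ * I))⁻¹) ^ n * G (Complex.exp (-θ * I)) + (starRingEnd ℂ)
        (Complex.exp (-θ * I) ^ n * (G (Complex.exp (-θ * I)) - 1))) := by
      intro θ
      rw [hfG, map_mul, map_pow, ← Complex.exp_conj, ← Complex.exp_neg]
      simp only [map_mul, map_neg, Complex.conj_ofReal, Complex.conj_I, neg_mul, mul_neg, neg_neg]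
      ring
    simp_rw [hsplit]
    rw [intervalIntegral.integral_const_mul, intervalIntegral.integral_add, hA, hB']
    · field_simp; simp
    · refine Continuous.intervalIntegrable ?_ _ _
      exact ((hec.inv₀ fun _ => Complex.exp_ne_zero _).pow n).mul hGcc
    · refine Continuous.intervalIntegrable ?_ _ _
      exact Complex.continuous_conj.comp ((hec.pow n).mul (hGcc.sub continuous_const))
  set ν : Measure ℝ := (volume.restrict (Ioc (-Real.pi) Real.pi)).withDensity
    (fun θ => ENNReal.ofReal (f θ)) with hν
  have hfi : IntegrableOn f (Ioc (-Real.pi) Real.pi) :=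
    (hcont.integrableOn_Icc).mono_set Ioc_subset_Icc_self
  have : IsFiniteMeasure ν := isFiniteMeasure_withDensity_ofReal hfi.2
  have hcm : Measurable (fun θ : ℝ => (θ : AddCircle (2 * Real.pi))) :=
    AddCircle.measurable_mk'
  have ham : Measurable (fun z : ℂ => ((arg z : ℝ) : AddCircle (2 * Real.pi))) :=
    hcm.comp measurable_arg
  have hfe : ∀ (n : ℕ) (θ : ℝ), fourier (n : ℤ) (θ : AddCircle (2 * Real.pi))
      = Complex.exp (θ * I) ^ n := by
    intro n θ
    rw [fourier_coe_apply, ← Complex.exp_nat_mul]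
    congr 1
    push_cast
    field_simp
  have key : μ.map (fun z : ℂ => ((arg z : ℝ) : AddCircle (2 * Real.pi)))
      = ν.map (fun θ : ℝ => (θ : AddCircle (2 * Real.pi))) := by
    have := Measure.isFiniteMeasure_map μ
      (fun z : ℂ => ((arg z : ℝ) : AddCircle (2 * Real.pi)))
    have := Measure.isFiniteMeasure_map ν
      (fun θ : ℝ => (θ : AddCircle (2 * Real.pi)))
    refine aux_fourier_unique _ _ fun n => ?_
    rw [integral_map ham.aemeasurable (fourier (n : ℤ)).continuous.aestronglyMeasurable,
      integral_map hcm.aemeasurable (fourier (n : ℤ)).continuous.aestronglyMeasurable]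
    simp only [hfe]
    rw [hν, integral_withDensity_eq_integral_toReal_smul
      (by fun_prop) (by simp)]
    simp only [ENNReal.toReal_ofReal (hf0 _), Complex.real_smul]
    rw [hfour n]
    refine integral_congr_ae ?_
    filter_upwards [hae] with z hz
    have := Complex.norm_mul_exp_arg_mul_I z
    rw [hz] at this
    simp only [ofReal_one, one_mul] at this
    rw [this]
  intro A hA
  have htm : Measurable (fun x : AddCircle (2 * Real.pi) => (AddCircle.toCircle x : ℂ)) :=
    (continuous_subtype_val.comp AddCircle.continuous_toCircle).measurable
  have hte : ∀ θ : ℝ, ((AddCircle.toCircle (θ : AddCircle (2 * Real.pi)) : Circle) : ℂ)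
      = Complex.exp (θ * I) := by
    intro θ
    have := hfe 1 θ
    simpa [fourier_one] using this
  have hS := htm hA
  have h1 := congrArg (fun R => (R ((fun x : AddCircle (2 * Real.pi) =>
    (AddCircle.toCircle x : ℂ)) ⁻¹' A)).toReal) key
  rw [Measure.map_apply ham hS, Measure.map_apply hcm hS] at h1
  have hB : MeasurableSet {θ : ℝ | Complex.exp (θ * I) ∈ A} :=
    (by fun_prop : Measurable fun θ : ℝ => Complex.exp (θ * I)) hA
  have e1 : μ ((fun z : ℂ => ((arg z : ℝ) : AddCircle (2 * Real.pi))) ⁻¹'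
      ((fun x : AddCircle (2 * Real.pi) => (AddCircle.toCircle x : ℂ)) ⁻¹' A)) = μ A := by
    refine measure_congr ?_
    filter_upwards [hae] with z hz
    have := Complex.norm_mul_exp_arg_mul_I z
    rw [hz] at this
    simp only [ofReal_one, one_mul] at this
    apply propext
    change ((AddCircle.toCircle ((arg z : ℝ) : AddCircle (2 * Real.pi)) : Circle) : ℂ) ∈ A ↔ z ∈ A
    rw [hte, this]
  have e2 : (fun θ : ℝ => (θ : AddCircle (2 * Real.pi))) ⁻¹'
      ((fun x : AddCircle (2 * Real.pi) => (AddCircle.toCircle x : ℂ)) ⁻¹' A)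
      = {θ : ℝ | Complex.exp (θ * I) ∈ A} := by
    ext θ
    change ((AddCircle.toCircle (θ : AddCircle (2 * Real.pi)) : Circle) : ℂ) ∈ A ↔ _
    rw [hte]; rfl
  rw [e1, e2, hν, withDensity_apply _ hB, Measure.restrict_restrict hB] at h1
  have e3 : {θ : ℝ | θ ∈ Set.Ioc (-Real.pi) Real.pi ∧ Complex.exp (θ * Complex.I) ∈ A}
      = {θ : ℝ | Complex.exp (θ * I) ∈ A} ∩ Ioc (-Real.pi) Real.pi := by
    ext θ; simp [and_comm]
  rw [h1, e3, integral_eq_lintegral_of_nonneg_ae (Filter.Eventually.of_forall hf0)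
    hcont.aestronglyMeasurable]
end

section
/- Let α ∈ ℂ with |α| = 1, let σ be a finite Borel measure on the unit circle 𝕋, and define Φ(z) = α z exp(∫_𝕋 (1+ξz)/(1−ξz) dσ(ξ)) for z in the open unit disc 𝔻. If z ∈ 𝔻, z ≠ 0, and |Φ(z)| ≤ 1, then ((1+|z|) log|z|)/(1−|z|) ≤ −σ(𝕋); equivalently, |z| ≤ g^{−1}(−σ(𝕋)) where g(r) = (1+r)log r/(1−r). -/
open MeasureTheory Complex Set Metric

/-- The free Lévy–Hinčin form `Φ(z) = α z exp(∫_𝕋 (1+ξz)/(1−ξz) dσ(ξ))`. -/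
noncomputable def PhiLH (α : ℂ) (σ : Measure ℂ) (z : ℂ) : ℂ :=
  α * z * Complex.exp (∫ ξ, (1 + ξ * z) / (1 - ξ * z) ∂σ)

/-- If `|α| = 1`, `σ` is a finite Borel measure on the unit circle and `Φ` is the
associated free Lévy–Hinčin form, then `|Φ(z)| ≤ 1` for a nonzero `z` in the open unit
disc forces `((1+|z|) log|z|)/(1−|z|) ≤ −σ(𝕋)`. -/
theorem modulus_bound_from_Phi (α : ℂ) (hα : ‖α‖ = 1)
    (σ : Measure ℂ) [IsFiniteMeasure σ] (hsupp : σ (sphere (0 : ℂ) 1)ᶜ = 0)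
    (z : ℂ) (hz : z ∈ ball (0 : ℂ) 1) (hz0 : z ≠ 0)
    (hΦ : ‖PhiLH α σ z‖ ≤ 1) :
    ((1 + ‖z‖) * Real.log ‖z‖) / (1 - ‖z‖) ≤ -(σ (sphere (0 : ℂ) 1)).toReal := by
  have hr1 : ‖z‖ < 1 := by simpa using hz
  have hr0 : 0 < ‖z‖ := norm_pos_iff.mpr hz0
  have hae : ∀ᵐ ξ ∂σ, ‖ξ‖ = 1 := by
    rw [ae_iff]
    convert hsupp using 2
    ext ξ
    simp
  have huniv : σ (sphere (0 : ℂ) 1) = σ univ := by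
    rw [← measure_add_measure_compl (μ := σ) (isClosed_sphere (x := (0 : ℂ)) (ε := 1)).measurableSet, hsupp, add_zero]
  have hlow : ∀ ξ : ℂ, ‖ξ‖ = 1 → 1 - ‖z‖ ≤ ‖1 - ξ * z‖ := by
    intro ξ hξ
    have := norm_sub_norm_le (1 : ℂ) (ξ * z)
    simpa [hξ] using this
  have hint : Integrable (fun ξ : ℂ => (1 + ξ * z) / (1 - ξ * z)) σ := by
    refine Integrable.of_bound (C := 2 / (1 - ‖z‖)) ?_ ?_
    · exact Measurable.aestronglyMeasurable (by fun_prop)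
    · filter_upwards [hae] with ξ hξ
      rw [norm_div]
      have h1 : ‖1 + ξ * z‖ ≤ 2 := by
        have := norm_add_le (1 : ℂ) (ξ * z)
        simp [hξ] at this
        linarith
      exact div_le_div₀ (by norm_num) h1 (by linarith) (hlow ξ hξ)
  have hre : ∀ ξ : ℂ, ‖ξ‖ = 1 →
      (1 - ‖z‖) / (1 + ‖z‖) ≤ ((1 + ξ * z) / (1 - ξ * z)).re := by
    intro ξ hξ
    have hl := hlow ξ hξ
    have hu : ‖1 - ξ * z‖ ≤ 1 + ‖z‖ := by
      have := norm_sub_le (1 : ℂ) (ξ * z)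
      simpa [hξ] using this
    have hw : ‖ξ * z‖ = ‖z‖ := by simp [hξ]
    generalize ξ * z = w at *
    have hpos : 0 < ‖1 - w‖ := by linarith
    have hwsq : ‖w‖ ^ 2 = w.re * w.re + w.im * w.im := by
      rw [← Complex.normSq_eq_norm_sq, Complex.normSq_apply]
    have heq : ((1 + w) / (1 - w)).re = (1 - ‖z‖ ^ 2) / ‖1 - w‖ ^ 2 := by
      rw [Complex.div_re, Complex.normSq_eq_norm_sq, ← add_div, ← hw, hwsq]
      congr 1
      simp
      ring
    rw [heq, div_le_div_iff₀ (by linarith) (by positivity)]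
    have : ‖1 - w‖ ^ 2 ≤ (1 + ‖z‖) ^ 2 := by gcongr
    nlinarith
  have hI : (1 - ‖z‖) / (1 + ‖z‖) * (σ univ).toReal
      ≤ (∫ ξ, (1 + ξ * z) / (1 - ξ * z) ∂σ).re := by
    have h1 : (∫ ξ, (1 + ξ * z) / (1 - ξ * z) ∂σ).re
        = ∫ ξ, ((1 + ξ * z) / (1 - ξ * z)).re ∂σ := (integral_re hint).symm
    rw [h1]
    have h2 : ∫ _ξ : ℂ, (1 - ‖z‖) / (1 + ‖z‖) ∂σ
        ≤ ∫ ξ, ((1 + ξ * z) / (1 - ξ * z)).re ∂σ := by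
      refine integral_mono_ae (integrable_const _) hint.re ?_
      filter_upwards [hae] with ξ hξ using hre ξ hξ
    rw [integral_const, smul_eq_mul, mul_comm] at h2
    exact h2
  rw [PhiLH, norm_mul, norm_mul, hα, one_mul, Complex.norm_exp] at hΦ
  have hlog := Real.log_nonpos (by positivity) hΦ
  rw [Real.log_mul hr0.ne' (Real.exp_pos _).ne', Real.log_exp] at hlog
  rw [huniv, div_le_iff₀ (by linarith)]
  rw [div_mul_eq_mul_div] at hI
  have h3 := (div_le_iff₀ (by linarith : (0:ℝ) < 1 + ‖z‖)).1 (hI.trans (by linarith : _ ≤ -Real.log ‖z‖))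
  linarith
end

section
/- Fix t > 0 and set Φ_t(z) = z·exp(t(1+z)/(2−2z)) for z in the open unit disc 𝔻. For each n, let u_n : 𝔻 → ℂ be analytic with Re u_n(z) ≥ 0 for all z ∈ 𝔻, set Φ_n(z) = z·exp(u_n(z)), and let ω_n : 𝔻̄ → 𝔻̄ be continuous and one-to-one on the closed unit disc 𝔻̄, with ω_n(𝔻) ⊆ 𝔻, ω_n analytic in 𝔻, and Φ_n(ω_n(z)) = z for all z ∈ 𝔻. Assume Φ_n → Φ_t uniformly on every compact subset of 𝔻 as n → ∞. Then there exist N ≥ 1 and a constant C ∈ (0,1) such that |ω_n(z)| ≥ C|z| for all n ≥ N and all z ∈ 𝔻̄. -/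
open Complex Set Metric Filter

/-- Lemma 4.5: let `Φ_t(z) = z exp(t(1+z)/(2−2z))` and let `Φ_n(z) = z exp(u_n(z))`
with `u_n` analytic on the open unit disc and `Re u_n ≥ 0`, with global inverses
`ω_n : 𝔻̄ → 𝔻̄`. If `Φ_n → Φ_t` uniformly on compact subsets of `𝔻`, then there are
`N` and `C ∈ (0,1)` such that `|ω_n(z)| ≥ C|z|` for all `n ≥ N` and `z ∈ 𝔻̄`. -/
theorem omega_quotient_bounded_below (t : ℝ) (ht : 0 < t)
    (u : ℕ → ℂ → ℂ) (hu : ∀ n, AnalyticOnNhd ℂ (u n) (ball 0 1))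
    (hre : ∀ n, ∀ z ∈ ball (0 : ℂ) 1, 0 ≤ (u n z).re)
    (ω : ℕ → ℂ → ℂ)
    (hωc : ∀ n, ContinuousOn (ω n) (closedBall 0 1))
    (hωinj : ∀ n, Set.InjOn (ω n) (closedBall 0 1))
    (hωmapsc : ∀ n, Set.MapsTo (ω n) (closedBall 0 1) (closedBall 0 1))
    (hωmaps : ∀ n, Set.MapsTo (ω n) (ball 0 1) (ball 0 1))
    (hωan : ∀ n, AnalyticOnNhd ℂ (ω n) (ball 0 1))
    (hinv : ∀ n, ∀ z ∈ ball (0 : ℂ) 1, ω n z * Complex.exp (u n (ω n z)) = z)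
    (hconv : ∀ K : Set ℂ, K ⊆ ball (0 : ℂ) 1 → IsCompact K →
      TendstoUniformlyOn (fun n z => z * Complex.exp (u n z))
        (fun z => z * Complex.exp (t * (1 + z) / (2 - 2 * z))) atTop K) :
    ∃ N : ℕ, ∃ C : ℝ, C ∈ Set.Ioo (0 : ℝ) 1 ∧
      ∀ n ≥ N, ∀ z ∈ closedBall (0 : ℂ) 1, C * ‖z‖ ≤ ‖ω n z‖ := by
  have hsub : closedBall (0 : ℂ) (1 / 2) ⊆ ball 0 1 :=
    closedBall_subset_ball (by norm_num)
  have hK : IsCompact (sphere (0 : ℂ) (1 / 2)) := isCompact_sphere _ _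
  have hsK : sphere (0 : ℂ) (1 / 2) ⊆ ball 0 1 := sphere_subset_closedBall.trans hsub
  obtain ⟨B, hB⟩ := hK.exists_bound_of_continuousOn
    (f := fun z : ℂ => z * Complex.exp (t * (1 + z) / (2 - 2 * z))) (by
      apply ContinuousOn.mul continuousOn_id
      apply ContinuousOn.cexp
      apply ContinuousOn.div (by fun_prop) (by fun_prop)
      intro z hz h
      have h1 : z = 1 := by linear_combination (-1 / 2) * h
      have h2 := hsK hz
      rw [h1] at h2
      simp at h2)
  have hev := Metric.tendstoUniformlyOn_iff.1 (hconv _ hsK hK) 1 one_pos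
  obtain ⟨N, hN⟩ := eventually_atTop.1 hev
  have hM : ∀ n ≥ N, ∀ w ∈ closedBall (0 : ℂ) (1 / 2),
      ‖Complex.exp (u n w)‖ ≤ 2 * (|B| + 1) := by
    intro n hn w hw
    have hd : DiffContOnCl ℂ (fun w => Complex.exp (u n w)) (ball 0 (1 / 2)) := by
      apply DifferentiableOn.diffContOnCl
      rw [closure_ball _ (by norm_num)]
      exact ((hu n).differentiableOn.mono hsub).cexp
    refine Complex.norm_le_of_forall_mem_frontier_norm_le isBounded_ball hd ?_
      (by rwa [closure_ball _ (by norm_num)])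
    intro z hz
    rw [frontier_ball _ (by norm_num)] at hz
    have h1 := hN n hn z hz
    have h2 := hB z hz
    rw [dist_comm, dist_eq_norm] at h1
    have h3 := norm_le_insert' (z * Complex.exp (u n z))
      (z * Complex.exp (t * (1 + z) / (2 - 2 * z)))
    have h4 : ‖z‖ = 1 / 2 := by simpa using hz
    have h5 : ‖z * Complex.exp (u n z)‖ = 1 / 2 * ‖Complex.exp (u n z)‖ := by
      rw [norm_mul, h4]
    have h6 := le_abs_self B
    linarith
  have hpos : 0 < 2 * (|B| + 1) := by positivity
  have hM2 : 2 ≤ 2 * (|B| + 1) := by linarith [abs_nonneg B]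
  refine ⟨N, (2 * (|B| + 1))⁻¹, ⟨inv_pos.2 hpos, inv_lt_one_of_one_lt₀ (by linarith)⟩, ?_⟩
  intro n hn
  have hball : ∀ z ∈ ball (0 : ℂ) 1, (2 * (|B| + 1))⁻¹ * ‖z‖ ≤ ‖ω n z‖ := by
    intro z hz
    rw [inv_mul_le_iff₀ hpos]
    by_cases h : ω n z ∈ closedBall (0 : ℂ) (1 / 2)
    · calc ‖z‖ = ‖ω n z‖ * ‖Complex.exp (u n (ω n z))‖ := by
            rw [← norm_mul, hinv n z hz]
        _ ≤ ‖ω n z‖ * (2 * (|B| + 1)) := by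
            gcongr
            exact hM n hn _ h
        _ = _ := mul_comm _ _
    · have h1 : 1 / 2 < ‖ω n z‖ := by simpa using h
      have h2 : ‖z‖ < 1 := by simpa using hz
      nlinarith
  intro z hz
  have hcl : closure (ball (0 : ℂ) 1) = closedBall 0 1 := closure_ball _ one_ne_zero
  refine le_on_closure hball ?_ ?_ (hcl ▸ hz)
  · fun_prop
  · rw [hcl]
    exact (hωc n).norm
end

section
/- Fix t > 0 and set Φ_t(z) = z·exp(t(1+z)/(2−2z)) for z in the open unit disc 𝔻. For each n, let α_n ∈ ℂ with |α_n| = 1 and let σ_n be a finite Borel measure on the unit circle 𝕋; set Φ_n(z) = α_n z·exp(∫_𝕋 (1+ξz)/(1−ξz) dσ_n(ξ)) for z ∈ 𝔻, and let ω_n : 𝔻̄ → 𝔻̄ be continuous and one-to-one on 𝔻̄, with ω_n(𝔻) ⊆ 𝔻, ω_n analytic in 𝔻, and Φ_n(ω_n(z)) = z for all z ∈ 𝔻. Assume Φ_n → Φ_t uniformly on every compact subset of 𝔻 as n → ∞. Then there exist N ≥ 1 and a constant C ∈ (0,1) such that for all n ≥ N and all z ∈ 𝔻̄ with z ≠ 0,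 the quotient w = ω_n(z)/z satisfies C ≤ |w| ≤ 1 and |arg w| ≤ 2, where arg is the principal argument; in particular ω_n(z)/z avoids the interval (−∞,0]. -/
open MeasureTheory Complex Set Metric Filter

lemma den_ne {u : ℂ} (hu : ‖u‖ < 1) : 1 - u ≠ 0 := by
  intro h
  have : u = 1 := by linear_combination -h
  rw [this] at hu
  simp at hu

lemma ker_re {u : ℂ} (hu : ‖u‖ < 1) :
    ((1 + u) / (1 - u)).re = (1 - ‖u‖ ^ 2) / ‖1 - u‖ ^ 2 := by
  have h : Complex.normSq (1 - u) ≠ 0 := by simpa using den_ne hu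
  rw [Complex.div_re, ← Complex.normSq_eq_norm_sq, ← Complex.normSq_eq_norm_sq, ← add_div]
  congr 1
  simp [Complex.normSq_apply]
  ring

lemma ker_im {u : ℂ} (hu : ‖u‖ < 1) :
    ((1 + u) / (1 - u)).im = 2 * u.im / ‖1 - u‖ ^ 2 := by
  have h : Complex.normSq (1 - u) ≠ 0 := by simpa using den_ne hu
  rw [Complex.div_im, ← Complex.normSq_eq_norm_sq, ← sub_div]
  congr 1
  simp
  ring

lemma den_low {u : ℂ} : 1 - ‖u‖ ≤ ‖1 - u‖ := by
  simpa using norm_sub_norm_le (1 : ℂ) u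

lemma den_up {u : ℂ} : ‖1 - u‖ ≤ 1 + ‖u‖ := by
  simpa using norm_sub_le (1 : ℂ) u

lemma ker_re_le {u : ℂ} (hu : ‖u‖ < 1) :
    ((1 + u) / (1 - u)).re ≤ (1 + ‖u‖) / (1 - ‖u‖) := by
  have h1 := den_low (u := u)
  have h0 : 0 < 1 - ‖u‖ := by linarith
  have h3 : 0 < ‖1 - u‖ := by linarith
  rw [ker_re hu, div_le_div_iff₀ (by positivity) h0]
  have : (1 - ‖u‖) ^ 2 ≤ ‖1 - u‖ ^ 2 := by gcongr
  nlinarith [norm_nonneg u]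

lemma le_ker_re {u : ℂ} (hu : ‖u‖ < 1) :
    (1 - ‖u‖) / (1 + ‖u‖) ≤ ((1 + u) / (1 - u)).re := by
  have h1 := den_up (u := u)
  have h2 := den_low (u := u)
  have h0 : 0 < 1 - ‖u‖ := by linarith
  have h3 : 0 < ‖1 - u‖ := by linarith
  rw [ker_re hu, div_le_div_iff₀ (by positivity) (by positivity)]
  have : ‖1 - u‖ ^ 2 ≤ (1 + ‖u‖) ^ 2 := by gcongr
  nlinarith [norm_nonneg u]

lemma ker_im_le {u : ℂ} (hu : ‖u‖ < 1) :
    ‖((1 + u) / (1 - u)).im‖ ≤ 2 * ‖u‖ / (1 - ‖u‖ ^ 2) * ((1 + u) / (1 - u)).re := by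
  have h2 := den_low (u := u)
  have h3 : 0 < ‖1 - u‖ := by linarith
  have h4 : 0 < 1 - ‖u‖ ^ 2 := by nlinarith [norm_nonneg u]
  rw [ker_re hu, ker_im hu, Real.norm_eq_abs, abs_div, abs_of_pos (by positivity : 0 < ‖1 - u‖ ^ 2),
    abs_mul, abs_two]
  have : 2 * ‖u‖ / (1 - ‖u‖ ^ 2) * ((1 - ‖u‖ ^ 2) / ‖1 - u‖ ^ 2) = 2 * ‖u‖ / ‖1 - u‖ ^ 2 := by
    field_simp
  rw [this]
  gcongr
  exact Complex.abs_im_le_norm u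

lemma ae_norm {σ : Measure ℂ} (hs : σ (sphere (0 : ℂ) 1)ᶜ = 0) (z : ℂ) : ∀ᵐ ξ ∂σ, ‖ξ * z‖ = ‖z‖ := by
  have : ∀ᵐ ξ ∂σ, ξ ∈ sphere (0 : ℂ) 1 := hs
  filter_upwards [this] with ξ hξ
  simp at hξ
  simp [hξ]

lemma ker_int {σ : Measure ℂ} [IsFiniteMeasure σ]
    (hs : σ (sphere (0 : ℂ) 1)ᶜ = 0) {z : ℂ} (hz : ‖z‖ < 1) : Integrable (fun ξ => (1 + ξ * z) / (1 - ξ * z)) σ := by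
  have h0 : 0 < 1 - ‖z‖ := by linarith
  refine Integrable.of_bound (C := 2 / (1 - ‖z‖)) ?_ ?_
  · apply Measurable.aestronglyMeasurable
    fun_prop
  · filter_upwards [ae_norm hs z] with ξ hξ
    rw [norm_div]
    have := den_low (u := ξ * z)
    rw [hξ] at this
    have h2 : ‖1 + ξ * z‖ ≤ 2 := by
      calc _ ≤ ‖(1 : ℂ)‖ + ‖ξ * z‖ := norm_add_le _ _
        _ ≤ 2 := by rw [hξ]; simp; linarith
    gcongr

lemma F_re {σ : Measure ℂ} [IsFiniteMeasure σ]
    (hs : σ (sphere (0 : ℂ) 1)ᶜ = 0) {z : ℂ} (hz : ‖z‖ < 1) : (∫ ξ, (1 + ξ * z) / (1 - ξ * z) ∂σ).re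
    = ∫ ξ, ((1 + ξ * z) / (1 - ξ * z)).re ∂σ := (integral_re (ker_int hs hz)).symm

lemma F_im {σ : Measure ℂ} [IsFiniteMeasure σ]
    (hs : σ (sphere (0 : ℂ) 1)ᶜ = 0) {z : ℂ} (hz : ‖z‖ < 1) : (∫ ξ, (1 + ξ * z) / (1 - ξ * z) ∂σ).im
    = ∫ ξ, ((1 + ξ * z) / (1 - ξ * z)).im ∂σ := (integral_im (ker_int hs hz)).symm

lemma F_re_le {σ : Measure ℂ} [IsFiniteMeasure σ]
    (hs : σ (sphere (0 : ℂ) 1)ᶜ = 0) {z : ℂ} (hz : ‖z‖ < 1) : (∫ ξ, (1 + ξ * z) / (1 - ξ * z) ∂σ).re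
    ≤ (1 + ‖z‖) / (1 - ‖z‖) * σ.real univ := by
  rw [F_re hs hz]
  calc _ ≤ ∫ ξ, (1 + ‖z‖) / (1 - ‖z‖) ∂σ := by
        apply integral_mono_ae (ker_int hs hz).re (integrable_const _)
        filter_upwards [ae_norm hs z] with ξ hξ
        have := ker_re_le (u := ξ * z) (by rwa [hξ])
        rw [hξ] at this
        exact this
    _ = _ := by simp [mul_comm]

lemma le_F_re {σ : Measure ℂ} [IsFiniteMeasure σ]
    (hs : σ (sphere (0 : ℂ) 1)ᶜ = 0) {z : ℂ} (hz : ‖z‖ < 1) : (1 - ‖z‖) / (1 + ‖z‖) * σ.real univ ≤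
    (∫ ξ, (1 + ξ * z) / (1 - ξ * z) ∂σ).re := by
  rw [F_re hs hz]
  calc _ = ∫ ξ, (1 - ‖z‖) / (1 + ‖z‖) ∂σ := by simp [mul_comm]
    _ ≤ _ := by
        apply integral_mono_ae (integrable_const _) (ker_int hs hz).re
        filter_upwards [ae_norm hs z] with ξ hξ
        have := le_ker_re (u := ξ * z) (by rwa [hξ])
        rw [hξ] at this
        exact this

lemma F_im_le {σ : Measure ℂ} [IsFiniteMeasure σ]
    (hs : σ (sphere (0 : ℂ) 1)ᶜ = 0) {z : ℂ} (hz : ‖z‖ < 1) : |(∫ ξ, (1 + ξ * z) / (1 - ξ * z) ∂σ).im| ≤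
    2 * ‖z‖ / (1 - ‖z‖ ^ 2) * (∫ ξ, (1 + ξ * z) / (1 - ξ * z) ∂σ).re := by
  rw [F_re hs hz, F_im hs hz, ← integral_const_mul, ← Real.norm_eq_abs]
  apply norm_integral_le_of_norm_le ((ker_int hs hz).re.const_mul _)
  filter_upwards [ae_norm hs z] with ξ hξ
  have := ker_im_le (u := ξ * z) (by rwa [hξ])
  rw [hξ] at this
  exact this

lemma F_re_nonneg {σ : Measure ℂ} [IsFiniteMeasure σ]
    (hs : σ (sphere (0 : ℂ) 1)ᶜ = 0) {z : ℂ} (hz : ‖z‖ < 1) : 0 ≤ (∫ ξ, (1 + ξ * z) / (1 - ξ * z) ∂σ).re := by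
  refine le_trans ?_ (le_F_re hs hz)
  have h0 : 0 < 1 - ‖z‖ := by linarith
  positivity

lemma log_bound {r : ℝ} (h0 : 0 < r) (h1 : r < 1) : 2 * r / (1 - r ^ 2) * (- Real.log r) ≤ 1 := by
  have h := Real.self_le_sinh_iff.2 (Real.log_nonneg (x := r⁻¹) (by
    rw [le_inv_comm₀ one_pos h0]; simpa using h1.le))
  rw [Real.sinh_log (by positivity), Real.log_inv, inv_inv] at h
  have h4 : 0 < 1 - r ^ 2 := by nlinarith
  rw [div_mul_eq_mul_div, div_le_one h4]
  calc 2 * r * -Real.log r ≤ 2 * r * ((r⁻¹ - r) / 2) := by gcongr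
    _ = 1 - r ^ 2 := by field_simp

/-- the closed sector -/
def sect (R : ℝ) : Set ℂ :=
  (fun p : ℝ × ℝ => Complex.exp (p.1 + p.2 * I)) '' (Icc (-R) 0 ×ˢ Icc (-2) 2)

lemma sect_closed (R : ℝ) : IsClosed (sect R) := by
  apply IsCompact.isClosed
  apply (isCompact_Icc.prod isCompact_Icc).image
  fun_prop

lemma sect_spec {R : ℝ} {w : ℂ} (h : w ∈ sect R) :
    Real.exp (-R) ≤ ‖w‖ ∧ ‖w‖ ≤ 1 ∧ |w.arg| ≤ 2 := by
  obtain ⟨⟨s, θ⟩, ⟨⟨h1, h2⟩, h3, h4⟩, rfl⟩ := h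
  simp only at h1 h2 h3 h4 ⊢
  have hpi := Real.pi_gt_three
  refine ⟨?_, ?_, ?_⟩
  · simpa [Complex.norm_exp] using h1
  · simpa [Complex.norm_exp] using h2
  · rw [Complex.exp_add, ← Complex.ofReal_exp, Complex.exp_mul_I,
      Complex.arg_mul_cos_add_sin_mul_I (Real.exp_pos s) ⟨by linarith, by linarith⟩]
    exact abs_le.2 ⟨h3, h4⟩

/-- the single-measure estimate -/
lemma interior_est {a : ℂ} {σ : Measure ℂ} [IsFiniteMeasure σ]
    (hs : σ (sphere (0 : ℂ) 1)ᶜ = 0) {γ M : ℝ} (ha : a = Complex.exp (γ * I)) (hγ : |γ| ≤ 1)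
    (hM : σ.real univ ≤ M) {w z : ℂ} (hw : ‖w‖ < 1) (hz1 : ‖z‖ < 1) (hz : z ≠ 0)
    (h : PhiLH a σ w = z) : w / z ∈ sect (3 * M + 1) := by
  unfold PhiLH at h
  have hw0 : w ≠ 0 := by
    rintro rfl
    apply hz
    rw [← h]; simp
  set F := ∫ ξ, (1 + ξ * w) / (1 - ξ * w) ∂σ with hF
  have hnn : 0 ≤ F.re := F_re_nonneg hs hw
  have hle := F_re_le hs hw
  have him := F_im_le hs hw
  rw [← hF] at hle him
  have hwp : 0 < ‖w‖ := norm_pos_iff.2 hw0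
  have hM0 : 0 ≤ M := le_trans measureReal_nonneg hM
  have hn : ‖w‖ * Real.exp F.re < 1 := by
    rw [← h, ha, norm_mul, norm_mul, Complex.norm_exp_ofReal_mul_I, Complex.norm_exp] at hz1
    simpa using hz1
  have hlog : F.re ≤ - Real.log ‖w‖ := by
    have := Real.log_le_log (by positivity) hn.le
    rw [Real.log_mul (by positivity) (by positivity), Real.log_exp, Real.log_one] at this
    linarith
  have him1 : |F.im| ≤ 1 := by
    refine him.trans (le_trans ?_ (log_bound hwp hw))
    have h4 : 0 < 1 - ‖w‖ ^ 2 := by nlinarith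
    gcongr
  have hre : F.re ≤ 3 * M + 1 := by
    rcases le_total ‖w‖ (1 / 2) with hc | hc
    · have h3 : (1 + ‖w‖) / (1 - ‖w‖) ≤ 3 := by
        rw [div_le_iff₀ (by linarith)]; linarith
      have : (1 + ‖w‖) / (1 - ‖w‖) * σ.real univ ≤ 3 * M := by gcongr
      linarith
    · have h5 := Real.log_le_log (by norm_num) hc
      have h6 : Real.log (1 / 2) = - Real.log 2 := by simp
      have := Real.log_two_lt_d9
      linarith
  refine ⟨(-F.re, -γ - F.im), ⟨⟨by simpa using hre, by simpa using hnn⟩, ?_, ?_⟩, ?_⟩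
  · have := abs_le.1 him1; have := abs_le.1 hγ; simp only; linarith
  · have := abs_le.1 him1; have := abs_le.1 hγ; simp only; linarith
  · simp only
    rw [eq_div_iff hz, ← h, ha]
    have : Complex.exp (γ * I) * w * Complex.exp F = w * Complex.exp (γ * I + F) := by
      rw [Complex.exp_add]; ring
    rw [this, mul_left_comm, ← Complex.exp_add]
    have h7 : ((-F.re : ℝ) : ℂ) + ((-γ - F.im : ℝ) : ℂ) * I + (γ * I + F) = 0 := by
      push_cast
      linear_combination -(Complex.re_add_im F)
    rw [h7]; simp

/-- Lemma 4.6: let `Φ_t(z) = z exp(t(1+z)/(2−2z))` and let `Φ_n` be free Lévy–Hinčin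
forms with `|α_n| = 1` and finite measures `σ_n` on the unit circle, with global
inverses `ω_n : 𝔻̄ → 𝔻̄`. If `Φ_n → Φ_t` uniformly on compact subsets of `𝔻`, then
there are `N` and `C ∈ (0,1)` such that for all `n ≥ N` and nonzero `z ∈ 𝔻̄`, the
quotient `w = ω_n(z)/z` satisfies `C ≤ |w| ≤ 1` and `|arg w| ≤ 2`; in particular
`w` avoids the interval `(−∞,0]`. -/
theorem omega_quotient_in_sector (t : ℝ) (ht : 0 < t)
    (α : ℕ → ℂ) (hα : ∀ n, ‖α n‖ = 1)
    (σ : ℕ → Measure ℂ) [∀ n, IsFiniteMeasure (σ n)]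
    (hsupp : ∀ n, (σ n) (sphere (0 : ℂ) 1)ᶜ = 0)
    (ω : ℕ → ℂ → ℂ)
    (hωc : ∀ n, ContinuousOn (ω n) (closedBall 0 1))
    (hωinj : ∀ n, Set.InjOn (ω n) (closedBall 0 1))
    (hωmapsc : ∀ n, Set.MapsTo (ω n) (closedBall 0 1) (closedBall 0 1))
    (hωmaps : ∀ n, Set.MapsTo (ω n) (ball 0 1) (ball 0 1))
    (hωan : ∀ n, AnalyticOnNhd ℂ (ω n) (ball 0 1))
    (hinv : ∀ n, ∀ z ∈ ball (0 : ℂ) 1, PhiLH (α n) (σ n) (ω n z) = z)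
    (hconv : ∀ K : Set ℂ, K ⊆ ball (0 : ℂ) 1 → IsCompact K →
      TendstoUniformlyOn (fun n z => PhiLH (α n) (σ n) z)
        (fun z => z * Complex.exp (t * (1 + z) / (2 - 2 * z))) atTop K) :
    ∃ N : ℕ, ∃ C : ℝ, C ∈ Set.Ioo (0 : ℝ) 1 ∧
      ∀ n ≥ N, ∀ z ∈ closedBall (0 : ℂ) 1, z ≠ 0 →
        C ≤ ‖ω n z / z‖ ∧ ‖ω n z / z‖ ≤ 1 ∧ |(ω n z / z).arg| ≤ 2 := by
  
  -- pointwise convergence of the quotient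
  have hpt : ∀ r : ℝ, 0 < r → r < 1 → Tendsto (fun n => α n *
      Complex.exp (∫ ξ, (1 + ξ * (r : ℂ)) / (1 - ξ * (r : ℂ)) ∂(σ n))) atTop
      (nhds ((Real.exp (t * (1 + r) / (2 - 2 * r)) : ℝ) : ℂ)) := by
    intro r h0 h1
    have h := (hconv {(r : ℂ)} (by simp [abs_of_pos h0, h1]) isCompact_singleton).tendsto_at
      (mem_singleton _)
    have h2 := h.const_mul ((r : ℂ)⁻¹)
    have hr : (r : ℂ) ≠ 0 := by exact_mod_cast h0.ne'
    convert h2 using 1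
    · ext n
      simp only [PhiLH]
      rw [mul_comm (α n) (r : ℂ), mul_assoc, inv_mul_cancel_left₀ hr]
    · rw [inv_mul_cancel_left₀ hr]
      push_cast
      rfl
  -- boundedness of masses
  obtain ⟨M, hM0, hM⟩ : ∃ M : ℝ, 0 < M ∧ ∀ᶠ n in atTop, (σ n).real univ ≤ M := by
    have h := (hpt (1 / 2) (by norm_num) (by norm_num)).norm
    set L := ‖((Real.exp (t * (1 + 1 / 2) / (2 - 2 * (1 / 2))) : ℝ) : ℂ)‖ with hL
    have hL0 : 0 ≤ L := norm_nonneg _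
    refine ⟨3 * (L + 1), by positivity, ?_⟩
    filter_upwards [h.eventually_lt_const (lt_add_one L)] with n hn
    have hz : ‖((1 / 2 : ℝ) : ℂ)‖ = 1 / 2 := by simp
    have := le_F_re (hsupp n) (z := ((1 / 2 : ℝ) : ℂ)) (by rw [hz]; norm_num)
    rw [hz] at this
    rw [norm_mul, hα, Complex.norm_exp, one_mul] at hn
    have h2 := Real.add_one_le_exp (∫ ξ, (1 + ξ * ((1 / 2 : ℝ) : ℂ)) /
      (1 - ξ * ((1 / 2 : ℝ) : ℂ)) ∂(σ n)).re
    norm_num at this h2 hn ⊢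
    linarith
  -- argument of `α n`
  have hγ : ∀ᶠ n in atTop, ∃ γ : ℝ, α n = Complex.exp (γ * I) ∧ |γ| ≤ 1 := by
    obtain ⟨r, hr0, hr1, hrM⟩ : ∃ r : ℝ, 0 < r ∧ r < 1 ∧
        2 * r / (1 - r ^ 2) * ((1 + r) / (1 - r) * M) ≤ 1 / 2 := by
      refine ⟨1 / (16 * M + 2), by positivity, ?_, ?_⟩
      · rw [div_lt_one (by positivity)]; linarith
      · have e1 : (1 - (1 / (16 * M + 2)) ^ 2) = (16 * M + 1) * (16 * M + 3) / (16 * M + 2) ^ 2 := by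
          field_simp; ring
        have e2 : 1 - 1 / (16 * M + 2) = (16 * M + 1) / (16 * M + 2) := by field_simp; ring
        have e3 : 1 + 1 / (16 * M + 2) = (16 * M + 3) / (16 * M + 2) := by field_simp; ring
        rw [e1, e2, e3]
        have : 2 * (1 / (16 * M + 2)) / ((16 * M + 1) * (16 * M + 3) / (16 * M + 2) ^ 2) *
          ((16 * M + 3) / (16 * M + 2) / ((16 * M + 1) / (16 * M + 2)) * M) =
          2 * M * (16 * M + 2) / (16 * M + 1) ^ 2 := by field_simp
        rw [this, div_le_div_iff₀ (by positivity) (by norm_num)]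
        nlinarith
    have h := hpt r hr0 hr1
    have harg := (Complex.continuousAt_arg (x := ((Real.exp (t * (1 + r) / (2 - 2 * r)) : ℝ) : ℂ))
      (Complex.ofReal_mem_slitPlane.2 (Real.exp_pos _))).tendsto.comp h
    rw [Complex.arg_ofReal_of_nonneg (Real.exp_pos _).le] at harg
    have hab := harg.abs
    rw [abs_zero] at hab
    filter_upwards [hM, hab.eventually_lt_const (by norm_num : (0 : ℝ) < 1 / 2)] with n hn1 hn2
    simp only [Function.comp] at hn2
    set F := ∫ ξ, (1 + ξ * (r : ℂ)) / (1 - ξ * (r : ℂ)) ∂(σ n) with hF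
    have hz : ‖(r : ℂ)‖ = r := by simp [abs_of_pos hr0]
    have hz1 : ‖(r : ℂ)‖ < 1 := by rwa [hz]
    have him := F_im_le (hsupp n) hz1
    have hre := F_re_le (hsupp n) hz1
    rw [← hF, hz] at him hre
    have h4 : 0 < 1 - r ^ 2 := by nlinarith
    have h5 : 0 < 1 - r := by linarith
    have him2 : |F.im| ≤ 1 / 2 := by
      refine him.trans (le_trans ?_ hrM)
      gcongr
      refine hre.trans ?_
      gcongr
    refine ⟨(α n * Complex.exp F).arg - F.im, ?_, ?_⟩
    · have h6 := Complex.norm_mul_exp_arg_mul_I (α n * Complex.exp F)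
      rw [norm_mul, hα, one_mul, Complex.norm_exp, Complex.ofReal_exp] at h6
      set β := (α n * Complex.exp F).arg
      have h7 : α n = (α n * Complex.exp F) * Complex.exp (-F) := by
        rw [mul_assoc, ← Complex.exp_add]; simp
      rw [h7, ← h6, ← Complex.exp_add, ← Complex.exp_add]
      congr 1
      push_cast
      linear_combination (Complex.re_add_im F)
    · refine (abs_sub _ _).trans ?_
      linarith
  obtain ⟨N, hN⟩ := eventually_atTop.1 (hM.and hγ)
  refine ⟨N, Real.exp (-(3 * M + 1)), ⟨Real.exp_pos _, ?_⟩, ?_⟩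
  · rw [Real.exp_lt_one_iff]; linarith
  intro n hn z hz hz0
  obtain ⟨hMn, γ, hγ1, hγ2⟩ := hN n hn
  apply sect_spec
  have hcl : z ∈ closure ({0}ᶜ ∩ ball (0 : ℂ) 1) := by
    apply isOpen_compl_singleton.inter_closure
    refine ⟨hz0, ?_⟩
    rwa [closure_ball _ one_ne_zero]
  have hcont : ContinuousWithinAt (fun z => ω n z / z) ({0}ᶜ ∩ ball (0 : ℂ) 1) z := by
    apply ContinuousWithinAt.div _ continuousWithinAt_id hz0
    exact (hωc n z hz).mono (inter_subset_right.trans ball_subset_closedBall)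
  have := hcont.mem_closure hcl (t := sect (3 * M + 1)) (by
    intro y hy
    have hy1 := hωmaps n hy.2
    have hy2 := hy.2
    simp only [mem_ball, dist_zero_right] at hy1 hy2
    exact interior_est (hsupp n) hγ1 hγ2 hMn hy1 hy2 hy.1 (hinv n y hy.2))
  rwa [(sect_closed _).closure_eq] at this
end

section
/- Let s > 0, r ∈ (0,1), and θ ∈ ℝ, and set D = 2 − 4r cos θ + 2r² (so D ≥ 2(1−r)² > 0). If r·exp(s(1−r²)/D) < 1, then 2sr|sin θ|/D ≤ 2r·log r/(r²−1); moreover, 2r·log r/(r²−1) ≤ 1 holds for every r ∈ (0,1). -/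
open Real Set

/-- Estimates (4.10)–(4.11): for `s > 0`, `r ∈ (0,1)`, `θ ∈ ℝ` and
`D = 2 − 4r cos θ + 2r²`, if `r·exp(s(1−r²)/D) < 1` then
`2sr|sin θ|/D ≤ 2r·log r/(r²−1)`; moreover `2r·log r/(r²−1) ≤ 1` for all
`r ∈ (0,1)`. -/
theorem arg_estimate_free_unitary_BM (s : ℝ) (hs : 0 < s) (r : ℝ)
    (hr : r ∈ Set.Ioo (0 : ℝ) 1) (θ : ℝ) :
    (r * Real.exp (s * (1 - r ^ 2) / (2 - 4 * r * Real.cos θ + 2 * r ^ 2)) < 1 →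
      2 * s * r * |Real.sin θ| / (2 - 4 * r * Real.cos θ + 2 * r ^ 2)
        ≤ 2 * r * Real.log r / (r ^ 2 - 1)) ∧
    ∀ r' : ℝ, r' ∈ Set.Ioo (0 : ℝ) 1 → 2 * r' * Real.log r' / (r' ^ 2 - 1) ≤ 1 := by
  constructor
  · obtain ⟨h0, h1⟩ := hr
    intro h
    have hD : 0 < 2 - 4 * r * Real.cos θ + 2 * r ^ 2 := by
      nlinarith [Real.cos_le_one θ, mul_le_mul_of_nonneg_left (Real.cos_le_one θ) h0.le,
        pow_pos (sub_pos.2 h1) 2]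
    generalize 2 - 4 * r * Real.cos θ + 2 * r ^ 2 = D at *
    have hq : 0 < 1 - r ^ 2 := by nlinarith
    have h2 := Real.log_lt_log (by positivity) h
    rw [Real.log_mul h0.ne' (Real.exp_pos _).ne', Real.log_exp, Real.log_one] at h2
    have h3 : s / D ≤ (-Real.log r) / (1 - r ^ 2) := by
      rw [le_div_iff₀ hq, div_mul_eq_mul_div]
      linarith
    have e : 2 * r * Real.log r / (r ^ 2 - 1) = 2 * r * ((-Real.log r) / (1 - r ^ 2)) := by
      rw [← neg_sub 1 (r ^ 2), div_neg, neg_div]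
      ring
    have h4 : 0 ≤ s / D := by positivity
    calc 2 * s * r * |Real.sin θ| / D = 2 * r * (s / D * |Real.sin θ|) := by ring
      _ ≤ 2 * r * (s / D * 1) := by
        gcongr
        exact Real.abs_sin_le_one θ
      _ ≤ 2 * r * ((-Real.log r) / (1 - r ^ 2)) := by
        rw [mul_one]
        gcongr
      _ = _ := e.symm
  · rintro x ⟨h0, h1⟩
    have hl : 0 ≤ -Real.log x := by linarith [Real.log_neg h0 h1]
    have h := Real.self_le_sinh_iff.2 hl
    rw [Real.sinh_eq, neg_neg, Real.exp_neg, Real.exp_log h0] at h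
    have hm := mul_le_mul_of_nonneg_left h (by positivity : 0 ≤ 2 * x)
    have e : 2 * x * ((x⁻¹ - x) / 2) = 1 - x ^ 2 := by
      field_simp
    rw [e] at hm
    have hq : x ^ 2 - 1 < 0 := by nlinarith
    rw [div_le_iff_of_neg hq]
    linarith
end

section
/- Let η : 𝔻 → ℂ be an analytic function on the open unit disc with η(0) = 0 and |η(z)| < 1 for all z ∈ 𝔻. Then there exists a Borel probability measure μ on the unit circle 𝕋 such that η(z) = ψ_μ(z)/(1+ψ_μ(z)) for every z ∈ 𝔻 (in particular 1+ψ_μ(z) ≠ 0 on 𝔻); moreover the first moment m(μ) = ∫_𝕋 ξ dμ(ξ) equals η′(0). -/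
open MeasureTheory Complex Set Metric

lemma avg_aux (p : ℂ → ℂ) (hp : DiffContOnCl ℂ p (ball 0 1)) (hp0 : p 0 = 0) (z : ℂ)
    (hz : z ∈ ball (0:ℂ) 1) :
    Real.circleAverage (fun w => ((1 + 2 * (p w).re : ℝ) : ℂ) * (z / (w - z))) 0 1 = p z := by
  have hz' : ‖z‖ < 1 := by simpa using hz
  have hpc : ContinuousOn p (closedBall 0 1) := by
    have := hp.2
    rwa [closure_ball _ one_ne_zero] at this
  have hps : ContinuousOn p (sphere 0 1) := hpc.mono sphere_subset_closedBall
  have hwz : ∀ w ∈ sphere (0:ℂ) 1, w - z ≠ 0 := by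
    intro w hw h
    have : ‖w‖ = 1 := by simpa using hw
    rw [sub_eq_zero.1 h] at this
    linarith
  have hden : ∀ w ∈ closedBall (0:ℂ) 1, 1 - w * (starRingEnd ℂ) z ≠ 0 := by
    intro w hw h
    have hw : ‖w‖ ≤ 1 := by simpa using hw
    have h1 : ‖w * (starRingEnd ℂ) z‖ = 1 := by rw [← sub_eq_zero.1 h]; simp
    rw [norm_mul, RCLike.norm_conj] at h1
    nlinarith [norm_nonneg z, norm_nonneg w]
  have h1p : DiffContOnCl ℂ (fun w => 1 + p w) (ball 0 |1|) := by
    rw [abs_one]; exact diffContOnCl_const.add hp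
  have e1 := h1p.circleAverage_smul_div (w := z) (by simpa using hz)
  have e2 := h1p.circleAverage
  let q : ℂ → ℂ := fun w => p w * (w * (starRingEnd ℂ) z / (1 - w * (starRingEnd ℂ) z))
  have hq : DiffContOnCl ℂ q (ball 0 |1|) := by
    rw [abs_one]
    refine DiffContOnCl.smul (c := p) (f := fun w => (w * (starRingEnd ℂ) z / (1 - w * (starRingEnd ℂ) z))) hp ?_
    refine DifferentiableOn.diffContOnCl ?_
    rw [closure_ball _ one_ne_zero]
    refine DifferentiableOn.div (by fun_prop) (by fun_prop) hden
  have hqs : ContinuousOn q (sphere 0 1) := by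
    have := hq.2
    rw [abs_one, closure_ball _ one_ne_zero] at this
    exact this.mono sphere_subset_closedBall
  have e3 := hq.circleAverage
  have e4 : Real.circleAverage (fun w => (starRingEnd ℂ) (q w)) 0 1 = 0 := by
    have := ContinuousLinearMap.circleAverage_comp_comm (Complex.conjCLE : ℂ →L[ℝ] ℂ) (c := 0) (R := 1) (f := q) (hqs.circleIntegrable zero_le_one)
    simp only [e3] at this
    simpa [q, hp0, Function.comp_def] using this
  have key : Real.circleAverage (fun w => ((1 + 2 * (p w).re : ℝ) : ℂ) * (z / (w - z))) 0 1 =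
      Real.circleAverage ((fun w => ((w - 0) / (w - z)) • (1 + p w)) - (fun w => 1 + p w) + (fun w => (starRingEnd ℂ) (q w))) 0 1 := by
    refine Real.circleAverage_congr_sphere ?_
    intro w hw
    have hw1 : w * (starRingEnd ℂ) w = 1 := by
      have : ‖w‖ = 1 := by simpa using hw
      rw [Complex.mul_conj, Complex.normSq_eq_norm_sq, this]; simp
    have h1 := hwz w (by simpa using hw)
    have hwc : (starRingEnd ℂ) w ≠ 0 := right_ne_zero_of_mul_eq_one hw1
    have hc : 1 - (starRingEnd ℂ) w * z = (starRingEnd ℂ) w * (w - z) := by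
      linear_combination -hw1
    have hre : ((1 + 2 * (p w).re : ℝ) : ℂ) = 1 + p w + (starRingEnd ℂ) (p w) := by
      push_cast; rw [add_assoc, Complex.add_conj]; push_cast; ring
    simp only [Pi.add_apply, Pi.sub_apply, q, map_mul, map_div₀, map_sub, map_one, Complex.conj_conj, hc, hre, smul_eq_mul]
    field_simp
    ring
  have c1 : ContinuousOn (fun w => ((w - 0) / (w - z)) • (1 + p w)) (sphere 0 1) :=
    (ContinuousOn.div (by fun_prop) (by fun_prop) hwz).smul (continuousOn_const.add hps)
  have c2 : ContinuousOn (fun w => 1 + p w) (sphere 0 1) := continuousOn_const.add hps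
  have c3 : ContinuousOn (fun w => (starRingEnd ℂ) (q w)) (sphere 0 1) := Complex.continuous_conj.comp_continuousOn hqs
  rw [key, Real.circleAverage_add ((c1.sub c2).circleIntegrable zero_le_one) (c3.circleIntegrable zero_le_one),
    Real.circleAverage_sub (c1.circleIntegrable zero_le_one) (c2.circleIntegrable zero_le_one), e1, e2, e4, hp0]
  ring

lemma mass_aux (p : ℂ → ℂ) (hp : DiffContOnCl ℂ p (ball 0 1)) (hp0 : p 0 = 0) :
    Real.circleAverage (fun w => (1 + 2 * (p w).re : ℝ)) 0 1 = 1 := by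
  have h1p : DiffContOnCl ℂ (fun w => 1 + 2 * p w) (ball 0 |1|) := by
    rw [abs_one]; exact diffContOnCl_const.add (hp.const_smul (2 : ℂ))
  have hs : ContinuousOn (fun w => 1 + 2 * p w) (sphere 0 1) := by
    have := h1p.2
    rw [abs_one, closure_ball _ one_ne_zero] at this
    exact this.mono sphere_subset_closedBall
  have e := h1p.circleAverage
  have := ContinuousLinearMap.circleAverage_comp_comm Complex.reCLM (hs.circleIntegrable zero_le_one)
  rw [e] at this
  simpa [hp0, Function.comp_def] using this

lemma meas_aux (p : ℂ → ℂ) (hp : DiffContOnCl ℂ p (ball 0 1)) (hp0 : p 0 = 0)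
    (hpos : ∀ w ∈ sphere (0:ℂ) 1, 0 ≤ 1 + 2 * (p w).re) :
    ∃ μ : ProbabilityMeasure (sphere (0:ℂ) 1), ∀ z ∈ ball (0:ℂ) 1,
      ∫ ξ, ((ξ:ℂ) * z) / (1 - ξ * z) ∂(μ : Measure (sphere (0:ℂ) 1)) = p z := by
  have hps : ContinuousOn p (sphere 0 1) := by
    have := hp.2
    rw [closure_ball _ one_ne_zero] at this
    exact this.mono sphere_subset_closedBall
  have hcs : ∀ θ : ℝ, circleMap 0 1 θ ∈ sphere (0:ℂ) 1 := fun θ => circleMap_mem_sphere 0 zero_le_one θ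
  let ρ : ℝ → ℝ := fun θ => (2 * Real.pi)⁻¹ * (1 + 2 * (p (circleMap 0 1 θ)).re)
  have hpi : 0 < 2 * Real.pi := Real.two_pi_pos
  have hρ0 : ∀ θ, 0 ≤ ρ θ := fun θ => mul_nonneg (inv_nonneg.2 hpi.le) (hpos _ (hcs θ))
  have hpcm : Continuous fun θ : ℝ => p (circleMap 0 1 θ) :=
    hps.comp_continuous (continuous_circleMap 0 1) hcs
  have hρc : Continuous ρ := by
    exact continuous_const.mul (continuous_const.add (continuous_const.mul (Complex.continuous_re.comp hpcm)))
  let d : ℝ → NNReal := fun θ => (ρ θ).toNNReal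
  have hd : Measurable d := hρc.measurable.real_toNNReal
  let T : ℝ → sphere (0:ℂ) 1 := fun θ => ⟨circleMap 0 1 (-θ), hcs _⟩
  have hT : Measurable T := by
    refine Continuous.measurable ?_
    exact Continuous.subtype_mk ((continuous_circleMap 0 1).comp continuous_neg) _
  let μ0 : Measure ℝ := (volume.restrict (Ioc 0 (2 * Real.pi))).withDensity (fun θ => (d θ : ENNReal))
  have hmass : μ0 univ = 1 := by
    have h := mass_aux p hp hp0
    rw [Real.circleAverage_def, smul_eq_mul, ← intervalIntegral.integral_const_mul, intervalIntegral.integral_of_le hpi.le] at h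
    simp only [μ0, withDensity_apply _ MeasurableSet.univ, Measure.restrict_univ]
    change ∫⁻ θ in Ioc 0 (2 * Real.pi), ENNReal.ofReal (ρ θ) = 1
    rw [← ofReal_integral_eq_lintegral_ofReal]
    · rw [h]; simp
    · exact (hρc.integrableOn_Icc).mono_set Ioc_subset_Icc_self
    · exact Filter.Eventually.of_forall hρ0
  haveI : IsProbabilityMeasure μ0 := ⟨hmass⟩
  refine ⟨⟨μ0.map T, Measure.isProbabilityMeasure_map hT.aemeasurable⟩, ?_⟩
  intro z hz
  change ∫ ξ, ((ξ:ℂ) * z) / (1 - ξ * z) ∂(μ0.map T) = p z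
  rw [integral_map hT.aemeasurable (by
    refine Measurable.aestronglyMeasurable ?_
    fun_prop), integral_withDensity_eq_integral_smul hd]
  rw [← avg_aux p hp hp0 z hz, Real.circleAverage_def, intervalIntegral.integral_of_le hpi.le, ← integral_smul]
  refine integral_congr_ae (Filter.Eventually.of_forall fun θ => ?_)
  have h1 : circleMap 0 1 (-θ) = (circleMap 0 1 θ)⁻¹ := by
    simp [circleMap, Complex.exp_neg]
  have h0 : circleMap 0 1 θ ≠ 0 := circleMap_ne_center one_ne_zero
  have h2 : circleMap 0 1 θ - z ≠ 0 := by
    intro h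
    have h3 := hcs θ
    rw [sub_eq_zero.1 h] at h3
    simp at h3 hz; linarith
  simp only [T, h1, NNReal.smul_def, d, Real.coe_toNNReal _ (hρ0 θ), ρ, Complex.real_smul]
  push_cast
  have h4 : 1 - (circleMap 0 1 θ)⁻¹ * z = (circleMap 0 1 θ)⁻¹ * (circleMap 0 1 θ - z) := by
    field_simp
  rw [h4]
  have : (Real.pi : ℂ) ≠ 0 := by exact_mod_cast Real.pi_ne_zero
  field_simp

lemma herglotz_aux (p : ℂ → ℂ) (hp : DifferentiableOn ℂ p (ball 0 1)) (hp0 : p 0 = 0)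
    (hpos : ∀ w ∈ ball (0:ℂ) 1, 0 ≤ 1 + 2 * (p w).re) :
    ∃ μ : ProbabilityMeasure (sphere (0:ℂ) 1), ∀ z ∈ ball (0:ℂ) 1,
      ∫ ξ, ((ξ:ℂ) * z) / (1 - ξ * z) ∂(μ : Measure (sphere (0:ℂ) 1)) = p z := by
  let r : ℕ → ℝ := fun n => 1 - 1 / ((n:ℝ) + 1)
  have hr0 : ∀ n, 0 ≤ r n := by
    intro n
    have : 1 / ((n:ℝ) + 1) ≤ 1 := by
      rw [div_le_one (by positivity)]; linarith [(Nat.cast_nonneg n : (0:ℝ) ≤ n)]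
    simp only [r]; linarith
  have hr1 : ∀ n, r n < 1 := by
    intro n
    have : 0 < 1 / ((n:ℝ) + 1) := by positivity
    simp only [r]; linarith
  have hrt : Filter.Tendsto r Filter.atTop (nhds 1) := by
    simpa [r] using (tendsto_const_nhds (x := (1:ℝ))).sub tendsto_one_div_add_atTop_nhds_zero_nat
  have hmem : ∀ n, ∀ w ∈ closedBall (0:ℂ) 1, (r n : ℂ) * w ∈ ball (0:ℂ) 1 := by
    intro n w hw
    simp only [mem_closedBall, mem_ball, dist_zero_right, norm_mul, Complex.norm_real, Real.norm_eq_abs, abs_of_nonneg (hr0 n)] at hw ⊢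
    nlinarith [hr0 n, hr1 n, norm_nonneg w]
  have hex : ∀ n, ∃ μ : ProbabilityMeasure (sphere (0:ℂ) 1), ∀ z ∈ ball (0:ℂ) 1,
      ∫ ξ, ((ξ:ℂ) * z) / (1 - ξ * z) ∂(μ : Measure (sphere (0:ℂ) 1)) = p (r n * z) := by
    intro n
    refine meas_aux (fun z => p (r n * z)) ?_ (by simpa using hp0) ?_
    · refine DifferentiableOn.diffContOnCl ?_
      rw [closure_ball _ one_ne_zero]
      exact hp.comp (by fun_prop) (hmem n)
    · intro w hw
      exact hpos _ (hmem n w (sphere_subset_closedBall hw))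
  choose μs hμs using hex
  haveI : CompactSpace (sphere (0:ℂ) 1) := isCompact_iff_compactSpace.1 (isCompact_sphere 0 1)
  let U : Ultrafilter ℕ := Filter.hyperfilter ℕ
  obtain ⟨μ, -, hμ⟩ := (isCompact_univ (X := ProbabilityMeasure (sphere (0:ℂ) 1))).ultrafilter_le_nhds (U.map μs) (by simp)
  refine ⟨μ, fun z hz => ?_⟩
  have hμ' : Filter.Tendsto μs (U : Filter ℕ) (nhds μ) := hμ
  rw [ProbabilityMeasure.tendsto_iff_forall_integral_rclike_tendsto ℂ] at hμ'
  have hcont : Continuous fun ξ : sphere (0:ℂ) 1 => ((ξ:ℂ) * z) / (1 - ξ * z) := by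
    refine Continuous.div (by fun_prop) (by fun_prop) ?_
    intro ξ h
    have h1 : ‖(ξ:ℂ) * z‖ = 1 := by rw [← sub_eq_zero.1 h]; simp
    have h2 : ‖(ξ:ℂ)‖ = 1 := by simpa using ξ.2
    have h3 : ‖z‖ < 1 := by simpa using hz
    rw [norm_mul, h2] at h1
    linarith
  have ht := hμ' (BoundedContinuousFunction.mkOfCompact ⟨_, hcont⟩)
  simp only [BoundedContinuousFunction.mkOfCompact_apply, ContinuousMap.coe_mk, hμs _ z hz] at ht
  have hU : (U : Filter ℕ) ≤ Filter.atTop := by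
    exact Nat.hyperfilter_le_atTop
  have hp1 : Filter.Tendsto (fun n => p (r n * z)) (U : Filter ℕ) (nhds (p z)) := by
    have hc : ContinuousAt p z := (hp.differentiableAt (isOpen_ball.mem_nhds hz)).continuousAt
    have h5 : Filter.Tendsto (fun n => (r n : ℂ) * z) Filter.atTop (nhds z) := by
      have := ((Complex.continuous_ofReal.tendsto 1).comp hrt).mul_const z
      simpa [Function.comp_def] using this
    exact (hc.tendsto.comp h5).mono_left hU
  exact tendsto_nhds_unique ht hp1

/-- Every analytic self-map `η` of the open unit disc with `η(0) = 0` and `|η| < 1`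
is the η-transform of a Borel probability measure `μ` on the unit circle, and the
first moment `m(μ) = ∫_𝕋 ξ dμ(ξ)` equals `η′(0)`. -/
theorem eta_characterization (η : ℂ → ℂ)
    (hηan : AnalyticOnNhd ℂ η (ball 0 1)) (hη0 : η 0 = 0)
    (hηlt : ∀ z ∈ ball (0 : ℂ) 1, ‖η z‖ < 1) :
    ∃ μ : Measure ℂ, IsProbabilityMeasure μ ∧ μ (sphere (0 : ℂ) 1)ᶜ = 0 ∧
      (∀ z ∈ ball (0 : ℂ) 1, 1 + psiC μ z ≠ 0 ∧ η z = psiC μ z / (1 + psiC μ z)) ∧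
      ∫ ξ, ξ ∂μ = deriv η 0 := by
  have hne : ∀ z ∈ ball (0:ℂ) 1, 1 - η z ≠ 0 := by
    intro z hz h
    have := hηlt z hz
    rw [← sub_eq_zero.1 h] at this
    simp at this
  obtain ⟨μ, hμ⟩ := herglotz_aux (fun z => η z / (1 - η z))
    (hηan.differentiableOn.div ((differentiableOn_const 1).sub hηan.differentiableOn) hne)
    (by simp [hη0]) (by
      intro w hw
      have h1 := hηlt w hw
      have h2 : 0 < Complex.normSq (1 - η w) := Complex.normSq_pos.2 (hne w hw)
      have h3 : Complex.normSq (η w) < 1 := by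
        rw [Complex.normSq_eq_norm_sq]; nlinarith [norm_nonneg (η w)]
      have h4 : 1 + 2 * (η w / (1 - η w)).re = (1 - Complex.normSq (η w)) / Complex.normSq (1 - η w) := by
        rw [eq_div_iff h2.ne', Complex.div_re]
        field_simp
        simp [Complex.normSq_apply]
        ring
      show 0 ≤ 1 + 2 * (η w / (1 - η w)).re
      rw [h4]
      exact div_nonneg (by linarith) h2.le)
  let ν : Measure ℂ := (μ : Measure (sphere (0:ℂ) 1)).map Subtype.val
  have hνp : IsProbabilityMeasure ν := Measure.isProbabilityMeasure_map measurable_subtype_coe.aemeasurable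
  have hν0 : ν (sphere (0 : ℂ) 1)ᶜ = 0 := by
    rw [Measure.map_apply measurable_subtype_coe isClosed_sphere.measurableSet.compl]
    have : (Subtype.val : sphere (0:ℂ) 1 → ℂ) ⁻¹' (sphere (0 : ℂ) 1)ᶜ = ∅ := by
      ext x; simp
    rw [this]; simp
  have hψ : ∀ z ∈ ball (0:ℂ) 1, psiC ν z = η z / (1 - η z) := by
    intro z hz
    rw [← hμ z hz, psiC, integral_map measurable_subtype_coe.aemeasurable]
    refine Measurable.aestronglyMeasurable ?_
    fun_prop
  have hmain : ∀ z ∈ ball (0 : ℂ) 1, 1 + psiC ν z ≠ 0 ∧ η z = psiC ν z / (1 + psiC ν z) := by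
    intro z hz
    have h := hne z hz
    have h1 : 1 + psiC ν z = 1 / (1 - η z) := by
      rw [hψ z hz]; field_simp; ring
    rw [h1]
    refine ⟨one_div_ne_zero h, ?_⟩
    rw [hψ z hz]; field_simp
  refine ⟨ν, hνp, hν0, hmain, ?_⟩
  have hae : ∀ᵐ ξ ∂ν, ‖ξ‖ = 1 := by
    refine measure_mono_null ?_ hν0
    intro x hx; simpa using hx
  let g : ℂ → ℂ := fun z => ∫ ξ, ξ / (1 - ξ * z) ∂ν
  have hgψ : ∀ z, psiC ν z = z * g z := by
    intro z
    simp only [psiC, g]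
    rw [← integral_const_mul]
    congr 1; ext ξ; ring
  have hgc : ContinuousAt g 0 := by
    refine continuousAt_of_dominated (bound := fun _ => 2) ?_ ?_ (integrable_const _) ?_
    · refine Filter.Eventually.of_forall fun z => Measurable.aestronglyMeasurable ?_
      fun_prop
    · filter_upwards [ball_mem_nhds (0:ℂ) (by norm_num : (0:ℝ) < 1/2)] with z hz
      filter_upwards [hae] with ξ hξ
      have hz : ‖z‖ < 1/2 := by simpa using hz
      have h1 : 1 - ‖z‖ ≤ ‖1 - ξ * z‖ := by
        have := norm_sub_norm_le (1:ℂ) (ξ * z)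
        simpa [hξ] using this
      rw [norm_div, hξ, div_le_iff₀ (by linarith)]
      linarith
    · refine Filter.Eventually.of_forall fun ξ => ?_
      refine ContinuousAt.div (by fun_prop) (by fun_prop) (by simp)
  have hg0 : g 0 = ∫ ξ, ξ ∂ν := by simp [g]
  rw [← hg0]
  symm
  refine HasDerivAt.deriv ?_
  rw [hasDerivAt_iff_tendsto_slope]
  have hlim : Filter.Tendsto (fun z => g z / (1 + z * g z)) (nhdsWithin 0 {0}ᶜ) (nhds (g 0)) := by
    have : ContinuousAt (fun z => g z / (1 + z * g z)) 0 :=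
      hgc.div (continuousAt_const.add (continuousAt_id.mul hgc)) (by simp)
    have h := this.tendsto
    simp only [zero_mul, add_zero, div_one] at h
    exact h.mono_left nhdsWithin_le_nhds
  refine hlim.congr' ?_
  filter_upwards [self_mem_nhdsWithin, nhdsWithin_le_nhds (ball_mem_nhds (0:ℂ) one_pos)] with z hz0 hz
  have hz0 : z ≠ 0 := hz0
  rw [slope_def_field, hη0, (hmain z hz).2, hgψ z, sub_zero, sub_zero]
  field_simp
end
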